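/- arXiv:2605.14009 — 2 statements merged into one kernel-verified Lean document; each statement's English description precedes it below -/
import Mathlib

section
/- Let q = p^m be any prime power, σ = p^k, a,b,c ∈ F_q, and let F = (F_1,F_2,F_3) : F_q^3 → F_q^3 be defined by F_1(x,y,z) = x^{σ+1} + a·y^σ·z + b·x^σ·y + c·x^σ·z, F_2(x,y,z) = a·y^{σ+1} + z^σ·x + b·z^σ·y + c·x^σ·y, F_3(x,y,z) = z^{σ+1} − x^σ·y. Then the following are equivalent: (1) F vanishes only at the origin (F(v)=0 ⟺ v=0) and the induced map on the projective plane P^2(F_q) (sending the projective class [v] of a nonzero v ∈ F_q^3 to [F(v)]) is a well-defined bijection of P^2(F_q); (2) the equation x^{σ²+σ+1} + c·x^{σ²+σ} + b·x^{σ²} + a = 0 has no solution x ∈ F_q. -/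
/-! In matrix form `F v = A v × B (σ v)`, where `σ` acts on coordinates, so `F v = 0` says that
`A v` and `B (σ v)` are dependent. For the given `A` and `B`, such `v ≠ 0` are the multiples of
`(σ t * t, 1, σ t)` with `t` a root of the projective polynomial.

Suppose `F` vanishes only at `0`, and that `n := F v` is proportional to `F w` for independent `v`
and `w`. Then `Aᵀ n` is orthogonal to `v, w` and `Bᵀ n` to `σ v, σ w`, so they are multiples of
`v × w` and `σ (v × w)`; the first is nonzero because `A` is injective, and hence
`Bᵀ n = μ • σ (Aᵀ n)` for some scalar `μ`. Pairing with `n` turns the additive map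
`x ↦ B (σ x) - μ • A x` into `y ↦ μ * (σ y - y)` at `y = Aᵀ n ⬝ x`, and the latter kills `1`. By
finiteness it is not onto, so neither is the former, which thus kills some `x ≠ 0`. Then `F x = 0`,
a contradiction. -/

section CrossProduct

open Matrix

variable {K : Type*} [Field K]

lemma exists_smul_eq_of_cross_eq_zero {v w : Fin 3 → K} (hv : v ≠ 0) (h : v ⨯₃ w = 0) :
    ∃ r : K, r • v = w := by
  contrapose! h
  exact crossProduct_ne_zero_iff_linearIndependent.2 ((LinearIndependent.pair_iff' hv).2 h)

lemma exists_smul_cross_eq_of_dotProduct_eq_zero {v w g : Fin 3 → K} (hvw : v ⨯₃ w ≠ 0)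
    (hv : g ⬝ᵥ v = 0) (hw : g ⬝ᵥ w = 0) : ∃ r : K, r • (v ⨯₃ w) = g := by
  apply exists_smul_eq_of_cross_eq_zero hvw
  rw [cross_cross_eq_smul_sub_smul, dotProduct_comm v, dotProduct_comm w, hv, hw, zero_smul,
    zero_smul, sub_zero]

lemma ringHom_comp_cross {R S : Type*} [CommRing R] [CommRing S] (σ : R →+* S)
    (v w : Fin 3 → R) : σ ∘ (v ⨯₃ w) = (σ ∘ v) ⨯₃ (σ ∘ w) := by
  ext i
  fin_cases i <;> simp [cross_apply]

end CrossProduct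

section SemilinearPencil

open Matrix

variable {K : Type*} [Field K]

lemma exists_dotProduct_eq {ι : Type*} [Fintype ι] {n : ι → K} (hn : n ≠ 0) (d : K) :
    ∃ q, n ⬝ᵥ q = d := by
  classical
  obtain ⟨i, hi⟩ := Function.ne_iff.1 hn
  exact ⟨Pi.single i (d / n i), by rw [dotProduct_single, mul_div_cancel₀ d hi]⟩

lemma not_surjective_mul_map_sub_self [Finite K] (σ : K →+* K) (μ : K) :
    ¬ Function.Surjective fun x => μ * (σ x - x) := by
  intro hsurj
  have hinj := Finite.injective_iff_surjective.2 hsurj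
  exact one_ne_zero (hinj (by simp : μ * (σ 1 - 1) = μ * (σ 0 - 0)))

lemma exists_mulVec_comp_eq_smul_mulVec [Finite K] {ι : Type*} [Fintype ι] (σ : K →+* K)
    {A B : Matrix ι ι K} {n : ι → K} (hn : n ≠ 0) {μ : K}
    (h : n ᵥ* B = μ • (σ ∘ (n ᵥ* A))) : ∃ x ≠ 0, B *ᵥ (σ ∘ x) = μ • A *ᵥ x := by
  let ψ : (ι → K) →+ (ι → K) :=
    (mulVecLin B).toAddMonoidHom.comp (σ.toAddMonoidHom.compLeft ι) -
      (μ • mulVecLin A).toAddMonoidHom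
  have hψ (x : ι → K) : ψ x = B *ᵥ (σ ∘ x) - μ • A *ᵥ x := rfl
  have hpair (x : ι → K) : n ⬝ᵥ ψ x = μ * (σ (n ᵥ* A ⬝ᵥ x) - n ᵥ* A ⬝ᵥ x) := by
    rw [hψ, dotProduct_sub, dotProduct_smul, dotProduct_mulVec, dotProduct_mulVec, h,
      smul_dotProduct, ← RingHom.map_dotProduct, smul_eq_mul, smul_eq_mul, mul_sub]
  have hsurj : ¬ Function.Surjective ψ := by
    intro hsurj
    refine not_surjective_mul_map_sub_self σ μ fun d => ?_
    obtain ⟨q, hq⟩ := exists_dotProduct_eq hn d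
    obtain ⟨x, rfl⟩ := hsurj q
    exact ⟨n ᵥ* A ⬝ᵥ x, (hpair x).symm.trans hq⟩
  rw [← Finite.injective_iff_surjective, injective_iff_map_eq_zero] at hsurj
  push Not at hsurj
  obtain ⟨x, hx, hx0⟩ := hsurj
  exact ⟨x, hx0, sub_eq_zero.1 hx⟩

end SemilinearPencil

section TwistedCross

open Matrix

variable {K : Type*} [Field K]

/-- The `σ`-twisted cross product `A v × B (σ v)`, with `σ` acting on coordinates; it vanishes
exactly where the pencil spanned by `A` and the semilinear map `B ∘ σ` degenerates. -/
def twistedCross (σ : K →+* K) (A B : Matrix (Fin 3) (Fin 3) K) (v : Fin 3 → K) : Fin 3 → K :=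
  (A *ᵥ v) ⨯₃ (B *ᵥ (σ ∘ v))

variable {σ : K →+* K} {A B : Matrix (Fin 3) (Fin 3) K}

lemma twistedCross_smul (r : K) (v : Fin 3 → K) :
    twistedCross σ A B (r • v) = (σ r * r) • twistedCross σ A B v := by
  have hσ : σ ∘ (r • v) = σ r • (σ ∘ v) := funext fun i => map_mul σ r (v i)
  simp only [twistedCross, hσ, mulVec_smul, map_smul, LinearMap.smul_apply, smul_smul]

lemma twistedCross_zero : twistedCross σ A B 0 = 0 := by
  simp only [twistedCross, mulVec_zero, map_zero, LinearMap.zero_apply]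

lemma twistedCross_vecMul_left_dotProduct (v : Fin 3 → K) :
    twistedCross σ A B v ᵥ* A ⬝ᵥ v = 0 := by
  rw [← dotProduct_mulVec, dotProduct_comm, twistedCross, dot_self_cross]

lemma twistedCross_vecMul_right_dotProduct (v : Fin 3 → K) :
    twistedCross σ A B v ᵥ* B ⬝ᵥ (σ ∘ v) = 0 := by
  rw [← dotProduct_mulVec, dotProduct_comm, twistedCross, dot_cross_self]

lemma twistedCross_eq_zero_of_mulVec_comp_eq_smul {μ : K} {x : Fin 3 → K}
    (h : B *ᵥ (σ ∘ x) = μ • A *ᵥ x) : twistedCross σ A B x = 0 := by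
  rw [twistedCross, h, map_smul, cross_self, smul_zero]

lemma vecMul_ne_zero_of_twistedCross (hF : ∀ v, twistedCross σ A B v = 0 → v = 0)
    {n : Fin 3 → K} (hn : n ≠ 0) : n ᵥ* A ≠ 0 := by
  intro hA
  obtain ⟨x, hx, hAx⟩ := exists_mulVec_eq_zero_iff.2 (exists_vecMul_eq_zero_iff.1 ⟨n, hn, hA⟩)
  exact hx (hF x (by rw [twistedCross, hAx, map_zero, LinearMap.zero_apply]))

theorem cross_eq_zero_of_twistedCross_eq_smul [Finite K]
    (hF : ∀ v, twistedCross σ A B v = 0 → v = 0) {v w : Fin 3 → K} (hv : v ≠ 0) {l : K}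
    (h : twistedCross σ A B v = l • twistedCross σ A B w) : v ⨯₃ w = 0 := by
  by_contra hvw
  set n := twistedCross σ A B v
  have hn : n ≠ 0 := fun hn => hv (hF v hn)
  obtain ⟨t, hA⟩ : ∃ t : K, t • (v ⨯₃ w) = n ᵥ* A :=
    exists_smul_cross_eq_of_dotProduct_eq_zero hvw (twistedCross_vecMul_left_dotProduct v)
      (by rw [h, smul_vecMul, smul_dotProduct, twistedCross_vecMul_left_dotProduct, smul_zero])
  have hσvw : (σ ∘ v) ⨯₃ (σ ∘ w) ≠ 0 := by
    rw [← ringHom_comp_cross]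
    exact fun h0 => hvw (funext fun i => (map_eq_zero σ).1 (congrFun h0 i))
  obtain ⟨r, hB⟩ : ∃ r : K, r • ((σ ∘ v) ⨯₃ (σ ∘ w)) = n ᵥ* B :=
    exists_smul_cross_eq_of_dotProduct_eq_zero hσvw (twistedCross_vecMul_right_dotProduct v)
      (by rw [h, smul_vecMul, smul_dotProduct, twistedCross_vecMul_right_dotProduct, smul_zero])
  have ht : σ t ≠ 0 := by
    rw [Ne, map_eq_zero]
    rintro rfl
    exact vecMul_ne_zero_of_twistedCross hF hn (by rw [← hA, zero_smul])
  have hAB : n ᵥ* B = (r / σ t) • (σ ∘ (n ᵥ* A)) := by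
    have hσ : σ ∘ (t • (v ⨯₃ w)) = σ t • (σ ∘ (v ⨯₃ w)) := funext fun i => map_mul σ t _
    rw [← hA, ← hB, hσ, smul_smul, div_mul_cancel₀ r ht, ringHom_comp_cross]
  obtain ⟨x, hx, hBA⟩ := exists_mulVec_comp_eq_smul_mulVec σ hn hAB
  exact hx (hF x (twistedCross_eq_zero_of_mulVec_comp_eq_smul hBA))

end TwistedCross

section InducedMap

open LinearAlgebra.Projectivization Matrix

variable {K V : Type*} [Field K] [AddCommGroup V] [Module K V]

lemma exists_bijective_projectivization [Finite V] {F : V → V} (hF : ∀ v, F v = 0 → v = 0)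
    (hsmul : ∀ (r : K) v, ∃ s : K, F (r • v) = s • F v)
    (hinj : ∀ v w, v ≠ 0 → w ≠ 0 → ∀ l : K, F v = l • F w → ∃ r : K, r • w = v) :
    ∃ G : ℙ K V → ℙ K V, Function.Bijective G ∧
      ∀ v (hv : v ≠ 0) (hFv : F v ≠ 0),
        G (Projectivization.mk K v hv) = Projectivization.mk K (F v) hFv := by
  let G : ℙ K V → ℙ K V := Projectivization.lift
    (fun v => Projectivization.mk K (F v) (mt (hF v) v.2)) fun v w t hvw => by
      obtain ⟨s, hs⟩ := hsmul t w
      exact (Projectivization.mk_eq_mk_iff' ..).2 ⟨s, by rw [hvw, hs]⟩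
  refine ⟨G, Finite.injective_iff_bijective.1 fun P Q hPQ => ?_, fun _ _ _ => rfl⟩
  induction P with | h v hv
  induction Q with | h w hw
  obtain ⟨l, hl⟩ := (Projectivization.mk_eq_mk_iff' ..).1 hPQ
  exact (Projectivization.mk_eq_mk_iff' ..).2 (hinj v w hv hw l hl.symm)

theorem exists_bijective_projectivization_iff_twistedCross [Finite K] {σ : K →+* K}
    {A B : Matrix (Fin 3) (Fin 3) K} (e : V ≃ₗ[K] (Fin 3 → K)) {F : V → V}
    (hF : ∀ v, e (F v) = twistedCross σ A B (e v)) :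
    ((∀ v, F v = 0 ↔ v = 0) ∧ ∃ G : ℙ K V → ℙ K V, Function.Bijective G ∧
      ∀ v (hv : v ≠ 0) (hFv : F v ≠ 0),
        G (Projectivization.mk K v hv) = Projectivization.mk K (F v) hFv) ↔
      ∀ v, twistedCross σ A B v = 0 → v = 0 := by
  have hzero (v : V) : F v = 0 ↔ twistedCross σ A B (e v) = 0 := by
    rw [← hF, LinearEquiv.map_eq_zero_iff]
  constructor
  · rintro ⟨h, -⟩ v hv
    rw [← e.apply_symm_apply v, ← hzero, h] at hv
    simpa only [LinearEquiv.map_eq_zero_iff] using hv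
  · intro h
    have hF0 (v : V) (hv : F v = 0) : v = 0 := e.map_eq_zero_iff.1 (h _ ((hzero v).1 hv))
    have : Finite V := Finite.of_equiv _ e.symm.toEquiv
    refine ⟨fun v => ⟨hF0 v, ?_⟩, exists_bijective_projectivization hF0 ?_ ?_⟩
    · rintro rfl
      rw [hzero, map_zero, twistedCross_zero]
    · intro r v
      exact ⟨σ r * r, e.injective (by rw [hF, map_smul, map_smul, twistedCross_smul, hF])⟩
    · intro v w hv hw l hl
      have hcross : e v ⨯₃ e w = 0 :=
        cross_eq_zero_of_twistedCross_eq_smul h (e.map_ne_zero_iff.2 hv)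
          (l := l) (by rw [← hF, hl, map_smul, hF])
      obtain ⟨r, hr⟩ := exists_smul_eq_of_cross_eq_zero (e.map_ne_zero_iff.2 hw)
        (by rw [← cross_anticomm, hcross, neg_zero])
      exact ⟨r, e.injective (by rw [map_smul, hr])⟩

end InducedMap

section ProjectivePolynomial

open Matrix

variable {K : Type*} [Field K]

/-- The matrix `A` for which the map `F` of the theorem is `F v = A v × B (σ v)`. -/
def linearFactor (b : K) : Matrix (Fin 3) (Fin 3) K :=
  !![0, 1, 0; 0, 0, -1; 1, b, 0]

/-- The matrix `B` for which the map `F` of the theorem is `F v = A v × B (σ v)`. -/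
def semilinearFactor (a c : K) : Matrix (Fin 3) (Fin 3) K :=
  !![0, 0, 1; -1, 0, 0; -c, -a, 0]

lemma linearFactor_mulVec (b x y z : K) :
    linearFactor b *ᵥ ![x, y, z] = ![y, -z, x + b * y] := by
  ext i
  fin_cases i <;> simp [linearFactor, vecHead, vecTail, mul_comm]

lemma semilinearFactor_mulVec (a c x y z : K) :
    semilinearFactor a c *ᵥ ![x, y, z] = ![z, -x, -(c * x) - a * y] := by
  ext i
  fin_cases i <;> simp [semilinearFactor, vecHead, vecTail, sub_eq_add_neg, mul_comm]

lemma twistedCross_factors (σ : K →+* K) (a b c x y z : K) :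
    twistedCross σ (linearFactor b) (semilinearFactor a c) ![x, y, z] =
      ![σ x * x + a * σ y * z + b * σ x * y + c * σ x * z,
        a * (σ y * y) + σ z * x + b * σ z * y + c * σ x * y,
        σ z * z - σ x * y] := by
  have hσ : σ ∘ ![x, y, z] = ![σ x, σ y, σ z] := by
    ext i
    fin_cases i <;> rfl
  rw [twistedCross, hσ, linearFactor_mulVec, semilinearFactor_mulVec, cross_apply]
  ext i
  fin_cases i <;> simp only [Fin.isValue, Fin.zero_eta, Fin.mk_one, Fin.reduceFinMk, cons_val] <;>
    ring

lemma exists_root_of_twistedCross_factors_eq_zero {σ : K →+* K} (hσ : Function.Surjective σ)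
    {a b c x y z : K} (hxyz : ![x, y, z] ≠ 0)
    (h : twistedCross σ (linearFactor b) (semilinearFactor a c) ![x, y, z] = 0) :
    ∃ t, σ (σ t) * σ t * t + c * (σ (σ t) * σ t) + b * σ (σ t) + a = 0 := by
  rw [twistedCross_factors] at h
  simp only [cons_eq_zero_iff, zero_empty, and_true] at h
  obtain ⟨h₁, h₂, h₃⟩ := h
  rcases eq_or_ne y 0 with rfl | hy
  · obtain rfl : z = 0 := by simpa using h₃
    obtain rfl : x = 0 := by simpa using h₁
    simp at hxyz
  · obtain ⟨t, ht⟩ := hσ (z / y)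
    obtain rfl : z = σ t * y := by rw [ht, div_mul_cancel₀ z hy]
    obtain rfl : x = σ t * t * y := by
      apply σ.injective
      apply mul_right_cancel₀ hy
      rw [← sub_eq_zero.1 h₃]
      simp only [map_mul]
      ring
    refine ⟨t, mul_right_cancel₀ (mul_ne_zero ((map_ne_zero σ).2 hy) hy) ?_⟩
    simp only [map_mul] at h₂
    linear_combination h₂

lemma twistedCross_factors_eq_zero_of_root {σ : K →+* K} {a b c t : K}
    (ht : σ (σ t) * σ t * t + c * (σ (σ t) * σ t) + b * σ (σ t) + a = 0) :
    twistedCross σ (linearFactor b) (semilinearFactor a c) ![σ t * t, 1, σ t] = 0 := by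
  simp only [twistedCross_factors, map_mul, map_one, cons_eq_zero_iff, zero_empty,
    and_true]
  refine ⟨?_, ?_, ?_⟩
  · linear_combination σ t * ht
  · linear_combination ht
  · ring

theorem twistedCross_factors_eq_zero_imp_iff {σ : K →+* K} (hσ : Function.Surjective σ)
    (a b c : K) :
    (∀ v, twistedCross σ (linearFactor b) (semilinearFactor a c) v = 0 → v = 0) ↔
      ¬ ∃ t, σ (σ t) * σ t * t + c * (σ (σ t) * σ t) + b * σ (σ t) + a = 0 := by
  constructor
  · rintro hF ⟨t, ht⟩
    have h0 := hF _ (twistedCross_factors_eq_zero_of_root ht)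
    exact one_ne_zero (congrFun h0 1)
  · intro hroot v hv
    obtain ⟨x, y, z, rfl⟩ : ∃ x y z, v = ![x, y, z] := ⟨_, _, _, (FinVec.etaExpand_eq v).symm⟩
    by_contra hv0
    exact hroot (exists_root_of_twistedCross_factors_eq_zero hσ hv0 hv)

end ProjectivePolynomial

/-- Coordinates on `K × K × K`, on which the cross product of `Fin 3 → K` is not available. -/
def prodProdLinearEquivFinThree (K : Type*) [Semiring K] : (K × K × K) ≃ₗ[K] (Fin 3 → K) where
  toFun w := ![w.1, w.2.1, w.2.2]
  invFun v := (v 0, v 1, v 2)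
  map_add' v w := by ext i; fin_cases i <;> rfl
  map_smul' r w := by ext i; fin_cases i <;> rfl
  left_inv _ := rfl
  right_inv v := by ext i; fin_cases i <;> rfl

/-- `F` vanishes only at the origin and induces a well-defined
bijection of the projective plane `P²(F_q)` iff the projective polynomial
`x^{σ²+σ+1} + c x^{σ²+σ} + b x^{σ²} + a` has no root in `F_q`. -/
theorem stmt1 {p m k : ℕ} (hp : p.Prime) (hm : 0 < m)
    {K : Type*} [Field K] [Fintype K] (hK : Fintype.card K = p ^ m)
    (a b c : K) (Fm : K × K × K → K × K × K)
    (hF : Fm = fun w =>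
      (w.1 ^ (p ^ k + 1) + a * w.2.1 ^ p ^ k * w.2.2 + b * w.1 ^ p ^ k * w.2.1
          + c * w.1 ^ p ^ k * w.2.2,
       a * w.2.1 ^ (p ^ k + 1) + w.2.2 ^ p ^ k * w.1 + b * w.2.2 ^ p ^ k * w.2.1
          + c * w.1 ^ p ^ k * w.2.1,
       w.2.2 ^ (p ^ k + 1) - w.1 ^ p ^ k * w.2.1)) :
    ((∀ v : K × K × K, Fm v = 0 ↔ v = 0) ∧
      ∃ G : Projectivization K (K × K × K) → Projectivization K (K × K × K),
        Function.Bijective G ∧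
        ∀ (v : K × K × K) (hv : v ≠ 0) (hFv : Fm v ≠ 0),
          G (Projectivization.mk K v hv) = Projectivization.mk K (Fm v) hFv) ↔
      ¬ ∃ x : K, x ^ (p ^ (2 * k) + p ^ k + 1) + c * x ^ (p ^ (2 * k) + p ^ k)
          + b * x ^ (p ^ (2 * k)) + a = 0 := by
  have : Fact p.Prime := ⟨hp⟩
  have : CharP K p := charP_of_card_eq_prime_pow hK
  let σ := iterateFrobenius K p k
  have hσ (x : K) : x ^ p ^ k = σ x := rfl
  have hσσ (x : K) : x ^ p ^ (2 * k) = σ (σ x) := by rw [two_mul, pow_add, pow_mul, hσ, hσ]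
  have hFm (v : K × K × K) : prodProdLinearEquivFinThree K (Fm v) =
      twistedCross σ (linearFactor b) (semilinearFactor a c)
        (prodProdLinearEquivFinThree K v) := by
    simp only [hF, pow_succ, hσ]
    exact (twistedCross_factors σ a b c v.1 v.2.1 v.2.2).symm
  simp only [pow_add, pow_one, hσ, hσσ]
  exact (exists_bijective_projectivization_iff_twistedCross _ hFm).trans
    (twistedCross_factors_eq_zero_imp_iff (Finite.surjective_of_injective σ.injective) a b c)
end

section
/- Let q = p^m be odd, n even, and let F : F_q^n → F_q^n be a σ-semiquadratic homogeneous map (F ∈ SQH(n,q)) with companion automorphism σ = p^k such that F(x) = 0 ⟺ x = 0 and F is 2-to-1 on F_q^n∖{0}. Then the induced map on P^{n−1}(F_q), sending the projective class [x] of nonzero x to [F(x)], is 2-to-1 on P^{n−1}(F_q): every point of P^{n−1}(F_q) in its image has exactly two preimages. -/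
/-- A map `F : F_q^n → F_q^n` is σ-semiquadratic homogeneous (`F ∈ SQH(n,q)` with
σ = p^k encoded as the natural number exponent `σ`). -/
def IsSQH {K : Type*} [Field K] {n : ℕ} (σ : ℕ)
    (F : (Fin n → K) → (Fin n → K)) : Prop :=
  ∀ i : Fin n,
    (∀ (c : K) (x : Fin n → K), F (c • x) i = c ^ (σ + 1) * F x i) ∧
    ∃ b : (Fin n → K) → (Fin n → K) → K,
      (∀ x x' y, b (x + x') y = b x y + b x' y) ∧
      (∀ x y y', b x (y + y') = b x y + b x y') ∧
      (∀ (c : K) (x y), b (c • x) y = c * b x y) ∧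
      (∀ (c : K) (x y), b x (c • y) = c ^ σ * b x y) ∧
      (∀ x y, F (x + y) i - F x i - F y i = b x y + b y x)

/-!
Since `F` is 2-to-1 and even, `F x = F y` means `x = ±y`. Hence `c * σ c = 1` only for `c = ±1`, so
the norms `c * σ c` are exactly the squares. Two points `[x]`, `[y]` with `F x = a • F y` then
coincide iff `a` is a square, so a fibre of the projective map has at most two points.

For the second point, a nonsquare `ν` fixed by `σ` exists: otherwise a nonsquare of the fixed field
is `h ^ 2` with `σ h = -h`, and `(1 + h) / (1 - h)` has norm one but is not `±1`. Over the fixed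
field of `σ`, `F` is a quadratic map, and for every linear functional `l ≠ 0` the form `l ∘ F` is
nondegenerate in an even number of variables, hence equivalent to its multiple by `ν`. So `F` and
`ν • F` meet each hyperplane `l = c` equally often. Counting pairs `(x, l)` with `l (F x) = l v`
recovers the size of the fibre over `v` from these numbers, so `F` and `ν • F` have fibres of equal
size, and `ν • F x` is a value of `F`.
-/

open Module
open QuadraticMap (polar weightedSumSquares)

section FiniteFields

variable {K : Type*} [Field K] [Finite K]

theorem exists_mul_sq_add_mul_sq_eq (hK : ringChar K ≠ 2) {a b : K} (ha : a ≠ 0) (hb : b ≠ 0)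
    (c : K) : ∃ s t, a * s ^ 2 + b * t ^ 2 = c := by
  have := Fintype.ofFinite K
  obtain ⟨s, t, hst⟩ := FiniteField.exists_root_sum_quadratic
    (Polynomial.degree_quadratic (b := 0) (c := -c) ha)
    (Polynomial.degree_quadratic (b := 0) (c := 0) hb) (FiniteField.odd_card_of_char_ne_two hK)
  refine ⟨s, t, ?_⟩
  simp only [Polynomial.eval_add, Polynomial.eval_mul, Polynomial.eval_C, Polynomial.eval_pow,
    Polynomial.eval_X] at hst
  linear_combination hst

theorem isSquare_mul_of_not_isSquare {a b : K} (ha : ¬IsSquare a) (hb : ¬IsSquare b) :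
    IsSquare (a * b) := by
  classical
  have := Fintype.ofFinite K
  have ha0 : a ≠ 0 := fun h => ha (h ▸ IsSquare.zero)
  have hb0 : b ≠ 0 := fun h => hb (h ▸ IsSquare.zero)
  rw [← quadraticChar_one_iff_isSquare (mul_ne_zero ha0 hb0), map_mul,
    quadraticChar_neg_one_iff_not_isSquare.mpr ha, quadraticChar_neg_one_iff_not_isSquare.mpr hb]
  norm_num

theorem isSquare_mul_map (σ : K →+* K) (c : K) : IsSquare (c * σ c) := by
  by_cases hc : IsSquare c
  · exact hc.mul (hc.map σ)
  · refine isSquare_mul_of_not_isSquare hc fun ⟨b, hb⟩ => hc ?_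
    obtain ⟨d, rfl⟩ := Finite.surjective_of_injective σ.injective b
    exact ⟨d, σ.injective (by rw [hb, map_mul])⟩

end FiniteFields

theorem range_eq_range_of_ker_le_ker {G H : Type*} [Group G] [Finite G] [Group H] {f g : G →* H}
    (hker : f.ker ≤ g.ker) (hrange : f.range ≤ g.range) : f.range = g.range := by
  have : Finite g.range := Set.finite_range g
  refine Subgroup.eq_of_le_of_card_ge hrange ?_
  rw [← Subgroup.index_ker, ← Subgroup.index_ker]
  exact Subgroup.index_antitone hker

section Norm

variable {K : Type*} [Field K] [Finite K] {σ : K →+* K}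

theorem exists_mul_map_eq_of_isSquare (hσ : ∀ c, c * σ c = 1 → c = 1 ∨ c = -1) {a : K}
    (ha : IsSquare a) : ∃ c, c * σ c = a := by
  obtain ⟨b, rfl⟩ := ha
  obtain rfl | hb := eq_or_ne b 0
  · exact ⟨0, by simp⟩
  let f : Kˣ →* Kˣ := MonoidHom.id Kˣ * Units.map (σ : K →* K)
  let g : Kˣ →* Kˣ := powMonoidHom 2
  have hker : f.ker ≤ g.ker := by
    intro u hu
    have hu' : (u : K) * σ u = 1 := congrArg Units.val hu
    exact Units.ext (sq_eq_one_iff.mpr (hσ u hu'))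
  have hrange : f.range ≤ g.range := by
    rintro _ ⟨u, rfl⟩
    obtain ⟨d, hd⟩ := isSquare_mul_map σ (u : K)
    have hd0 : d ≠ 0 := by
      rintro rfl
      simp at hd
    exact ⟨Units.mk0 d hd0, Units.ext ((sq d).trans hd.symm)⟩
  obtain ⟨u, hu⟩ : g (Units.mk0 b hb) ∈ f.range :=
    range_eq_range_of_ker_le_ker hker hrange ▸ ⟨_, rfl⟩
  exact ⟨u, (congrArg Units.val hu).trans (sq b)⟩

theorem exists_map_eq_self_not_isSquare (hK : ringChar K ≠ 2)
    (hσ : ∀ c, c * σ c = 1 → c = 1 ∨ c = -1) : ∃ ν, σ ν = ν ∧ ¬IsSquare ν := by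
  have h2 : (2 : K) ≠ 0 := Ring.two_ne_zero hK
  let K₀ := σ.eqLocusField (RingHom.id K)
  have hK₀ : ringChar K₀ ≠ 2 := by rwa [Algebra.ringChar_eq K₀ K]
  obtain ⟨⟨ν, hν⟩, hsq⟩ := FiniteField.exists_nonsquare hK₀
  refine ⟨ν, hν, ?_⟩
  rintro ⟨h, rfl⟩
  have hσh : σ h ≠ h := fun hh => hsq ⟨⟨h, hh⟩, rfl⟩
  have hneg : σ h = -h :=
    (mul_self_eq_mul_self_iff.mp ((map_mul σ h h).symm.trans hν)).resolve_left hσh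
  have hplus : 1 + h ≠ 0 := fun h0 => hσh <| by simp [eq_neg_of_add_eq_zero_right h0]
  have hminus : 1 - h ≠ 0 := fun h0 => hσh <| by simp [← sub_eq_zero.mp h0]
  -- The Hilbert 90 element `z / σ z` for `z = 1 + h`; it has norm one because `σ (σ h) = h`.
  have hone : (1 + h) / (1 - h) * σ ((1 + h) / (1 - h)) = 1 := by
    rw [map_div₀, map_add, map_sub, map_one, hneg, sub_neg_eq_add, ← sub_eq_add_neg]
    field_simp
  rcases hσ _ hone with hc | hc
  · rw [div_eq_iff hminus] at hc
    have : h = 0 := (mul_eq_zero.mp (by linear_combination hc : 2 * h = 0)).resolve_left h2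
    simp [this] at hσh
  · rw [div_eq_iff hminus] at hc
    exact h2 (by linear_combination hc)

end Norm

section Similitude

variable {k V : Type*} [Field k] [Finite k] [AddCommGroup V] [Module k V]

theorem exists_weightedSumSquares_similitude (hk : ringChar k ≠ 2) {n : ℕ} (hn : Even n)
    (w : Fin n → kˣ) (ν : k) : ∃ T : (Fin n → k) →ₗ[k] (Fin n → k),
      ∀ x, weightedSumSquares k w (T x) = ν * weightedSumSquares k w x := by
  obtain ⟨r, rfl⟩ := hn
  let a (j : Fin r) : k := w (Fin.castAdd r j)
  let b (j : Fin r) : k := w (Fin.natAdd r j)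
  have ha (j : Fin r) : a j ≠ 0 := Units.ne_zero _
  choose s t hst using fun j =>
    exists_mul_sq_add_mul_sq_eq hk (ha j) (b := b j) (Units.ne_zero _) (ν * a j)
  let X (j : Fin r) : (Fin (r + r) → k) →ₗ[k] k := LinearMap.proj (Fin.castAdd r j)
  let Y (j : Fin r) : (Fin (r + r) → k) →ₗ[k] k := LinearMap.proj (Fin.natAdd r j)
  -- Pair the coordinates: if `a s² + b t² = ν a`, then `(X, Y) ↦ (s X - (b / a) t Y, t X + s Y)`
  -- multiplies the form `a X² + b Y²` by `ν`.
  refine ⟨LinearMap.pi (Fin.addCases (fun j => s j • X j - (b j / a j * t j) • Y j)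
    fun j => t j • X j + s j • Y j), fun x => ?_⟩
  have hpair (j : Fin r) :
      a j * (s j * X j x - b j / a j * t j * Y j x) ^ 2 + b j * (t j * X j x + s j * Y j x) ^ 2 =
        ν * (a j * X j x ^ 2 + b j * Y j x ^ 2) := by
    have := ha j
    field_simp
    linear_combination (a j * X j x ^ 2 + b j * Y j x ^ 2) * hst j
  simp only [QuadraticMap.weightedSumSquares_apply, Fin.sum_univ_add, ← Finset.sum_add_distrib,
    Finset.mul_sum, LinearMap.pi_apply, Fin.addCases_left, Fin.addCases_right, ← sq]
  exact Finset.sum_congr rfl fun j _ => hpair j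

theorem equivalent_smul_of_even_finrank [Module.Finite k V] (hk : ringChar k ≠ 2)
    (hV : Even (finrank k V)) {Q : QuadraticForm k V} (hQ : Q.polarBilin.SeparatingLeft) {ν : k}
    (hν : ν ≠ 0) : (ν • Q).Equivalent Q := by
  have h2 : (2 : k) ≠ 0 := Ring.two_ne_zero hk
  have : Invertible (2 : k) := invertibleOfNonzero h2
  obtain ⟨w, ⟨e⟩⟩ := QuadraticForm.equivalent_weightedSumSquares_units_of_nondegenerate' Q
    fun x hx => hQ x fun y => by simpa [QuadraticMap.associated_apply, polar, h2] using hx y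
  obtain ⟨T, hT⟩ := exists_weightedSumSquares_similitude hk hV w ν
  let S : V →ₗ[k] V := e.toLinearEquiv.symm ∘ₗ T ∘ₗ e.toLinearEquiv
  have hS (x : V) : Q (S x) = ν * Q x := by
    rw [← e.map_app x, ← hT, ← e.map_app]
    simp [S]
  have hpolar (x y : V) : polar Q (S x) (S y) = ν * polar Q x y := by
    simp only [polar, ← map_add, hS]
    ring
  have hinj : Function.Injective S := by
    refine (injective_iff_map_eq_zero S).mpr fun x hx => hQ x fun y => ?_
    have := hpolar x y
    rw [hx, QuadraticMap.polar_zero_left] at this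
    exact (mul_eq_zero.mp this.symm).resolve_left hν
  exact ⟨{ LinearEquiv.ofInjectiveEndo S hinj with map_app' := hS }⟩

end Similitude

section DualCounting

variable {k W ι : Type*} [Field k] [AddCommGroup W] [Module k W] [Module.Finite k W]

theorem natCard_dual_apply_eq_zero_mul {w : W} (hw : w ≠ 0) :
    Nat.card {l : Dual k W // l w = 0} * Nat.card k = Nat.card (Dual k W) := by
  have hsurj : Function.Surjective (Dual.eval k W w) :=
    LinearMap.surjective fun h => hw ((forall_dual_apply_eq_zero_iff k w).mp (DFunLike.congr_fun h))
  rw [Submodule.card_eq_card_quotient_mul_card (LinearMap.ker (Dual.eval k W w)),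
    Nat.card_congr ((Dual.eval k W w).quotKerEquivOfSurjective hsurj).toEquiv]
  rfl

variable [Finite k]

theorem natCard_mul_natCard_incidence_add [Finite ι] (f : ι → W) (v : W) :
    Nat.card k * Nat.card {p : ι × Dual k W // p.2 (f p.1) = p.2 v} +
        Nat.card (Dual k W) * Nat.card {i // f i = v} =
      Nat.card (Dual k W) * (Nat.card ι + Nat.card k * Nat.card {i // f i = v}) := by
  classical
  have := Fintype.ofFinite ι
  have : Finite (Dual k W) := Module.finite_of_finite k
  have hfiber (i : ι) : Nat.card k * Nat.card {l : Dual k W // l (f i) = l v} +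
      Nat.card (Dual k W) * (if f i = v then 1 else 0) =
      Nat.card (Dual k W) * (1 + Nat.card k * if f i = v then 1 else 0) := by
    split_ifs with hi
    · have htrivial : Nat.card {l : Dual k W // l (f i) = l v} = Nat.card (Dual k W) :=
        Nat.card_congr (Equiv.subtypeUnivEquiv fun l => congrArg l hi)
      rw [htrivial]
      ring
    · have := natCard_dual_apply_eq_zero_mul (k := k) (sub_ne_zero.mpr hi)
      simp only [map_sub, sub_eq_zero] at this
      linarith
  have hcard : Nat.card {i // f i = v} = ∑ i, if f i = v then 1 else 0 := by
    simp [Fintype.card_subtype]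
  rw [Nat.card_congr (Equiv.subtypeProdEquivSigmaSubtype fun i (l : Dual k W) => l (f i) = l v),
    Nat.card_sigma, hcard, Nat.card_eq_fintype_card (α := ι), Fintype.card_eq_sum_ones]
  simp only [Finset.mul_sum, ← Finset.sum_add_distrib]
  simpa only [mul_add, Finset.mul_sum] using Finset.sum_congr rfl fun i _ => hfiber i

theorem natCard_fiber_eq_of_dual [Finite ι] {f g : ι → W}
    (h : ∀ (l : Dual k W) (c : k), Nat.card {i // l (f i) = c} = Nat.card {i // l (g i) = c})
    (v : W) : Nat.card {i // f i = v} = Nat.card {i // g i = v} := by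
  have : Finite (Dual k W) := Module.finite_of_finite k
  have := Fintype.ofFinite (Dual k W)
  have hsum (f : ι → W) : Nat.card {p : ι × Dual k W // p.2 (f p.1) = p.2 v} =
      ∑ l : Dual k W, Nat.card {i // l (f i) = l v} := by
    rw [← Nat.card_sigma]
    exact Nat.card_congr (((Equiv.prodComm _ _).subtypeEquiv fun _ => Iff.rfl).trans
      (Equiv.subtypeProdEquivSigmaSubtype fun (l : Dual k W) i => l (f i) = l v))
  have hincidence : Nat.card {p : ι × Dual k W // p.2 (f p.1) = p.2 v} =
      Nat.card {p : ι × Dual k W // p.2 (g p.1) = p.2 v} := by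
    simp only [hsum, h]
  have hf := natCard_mul_natCard_incidence_add (k := k) f v
  have hg := natCard_mul_natCard_incidence_add (k := k) g v
  have hD : 0 < Nat.card (Dual k W) := Nat.card_pos
  obtain ⟨r, hr⟩ := Nat.exists_eq_add_of_le' (Finite.one_lt_card (α := k))
  rw [hr] at hf hg
  rw [hincidence] at hf
  have hmul : Nat.card (Dual k W) * ((r + 1) * Nat.card {i // f i = v}) =
      Nat.card (Dual k W) * ((r + 1) * Nat.card {i // g i = v}) := by
    linarith
  exact Nat.eq_of_mul_eq_mul_left r.succ_pos (Nat.eq_of_mul_eq_mul_left hD hmul)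

end DualCounting

section PlanarQuadraticMap

variable {k V W : Type*} [Field k] [AddCommGroup V] [Module k V] [AddCommGroup W] [Module k W]

theorem eq_zero_of_eq_neg_self (hk : ringChar k ≠ 2) {x : V} (hx : x = -x) : x = 0 := by
  rw [eq_neg_iff_add_eq_zero, ← two_smul k] at hx
  exact (smul_eq_zero.mp hx).resolve_left (Ring.two_ne_zero hk)

theorem eq_zero_or_eq_zero_of_polar_eq_zero (hk : ringChar k ≠ 2) {Q : QuadraticMap k V W}
    (hQ : ∀ x y, Q x = Q y → x = y ∨ x = -y) {x y : V} (hxy : polar Q x y = 0) :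
    x = 0 ∨ y = 0 := by
  have hadd : Q (x + y) = Q x + Q y := by
    rwa [polar, sub_sub, sub_eq_zero] at hxy
  have hsub : Q (x + -y) = Q x + Q y := by
    have := QuadraticMap.polar_neg_right Q x y
    rwa [hxy, neg_zero, polar, QuadraticMap.map_neg, sub_sub, sub_eq_zero] at this
  rcases hQ _ _ (hadd.trans hsub.symm) with h | h
  · exact .inr (eq_zero_of_eq_neg_self hk (add_left_cancel h))
  · rw [neg_add, neg_neg] at h
    exact .inl (eq_zero_of_eq_neg_self hk (add_right_cancel h))

theorem polarBilin_separatingLeft_compQuadraticMap [Module.Finite k V] [Module.Finite k W]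
    (hVW : finrank k V = finrank k W) {Q : QuadraticMap k V W}
    (hQ : ∀ x y, polar Q x y = 0 → x = 0 ∨ y = 0) {l : Dual k W} (hl : l ≠ 0) :
    (l.compQuadraticMap Q).polarBilin.SeparatingLeft := by
  intro x hx
  by_contra hx0
  have hinj : Function.Injective (Q.polarBilin x) :=
    (injective_iff_map_eq_zero _).mpr fun y hy => (hQ x y hy).resolve_left hx0
  refine hl (LinearMap.ext fun z => ?_)
  obtain ⟨y, rfl⟩ := (LinearMap.injective_iff_surjective_of_finrank_eq_finrank hVW).mp hinj z
  simpa [polar] using hx y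

theorem natCard_fiber_smul [Finite k] [Module.Finite k V] [Module.Finite k W]
    (hk : ringChar k ≠ 2) (hV : Even (finrank k V)) (hVW : finrank k V = finrank k W)
    {Q : QuadraticMap k V W} (hQ : ∀ x y, polar Q x y = 0 → x = 0 ∨ y = 0) {ν : k} (hν : ν ≠ 0)
    (v : W) : Nat.card {x // Q x = ν • v} = Nat.card {x // Q x = v} := by
  have : Finite V := Module.finite_of_finite k
  have hdual (l : Dual k W) (c : k) :
      Nat.card {x // l (Q x) = c} = Nat.card {x // l (ν • Q x) = c} := by
    obtain rfl | hl := eq_or_ne l 0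
    · rfl
    obtain ⟨e⟩ := equivalent_smul_of_even_finrank hk hV
      (polarBilin_separatingLeft_compQuadraticMap hVW hQ hl) hν
    refine (Nat.card_congr (e.toLinearEquiv.toEquiv.subtypeEquiv fun x => ?_)).symm
    have he : l (Q (e x)) = l (ν • Q x) := (e.map_app x).trans (map_smul l ν (Q x)).symm
    exact he ▸ Iff.rfl
  rw [natCard_fiber_eq_of_dual hdual]
  simp only [smul_right_inj hν]

end PlanarQuadraticMap

/-- A map `F : V → W` between `K`-vector spaces is `σ`-semiquadratic if it is homogeneous for the
"norm" `c ↦ c * σ c` and its polarization is the symmetrization of a `σ`-sesquilinear map. For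
`V = W = K^n` and `σ` a power of Frobenius these are the elements of `SQH(n, q)`. -/
structure IsSemiquadratic {K V W : Type*} [Field K] [AddCommGroup V] [Module K V] [AddCommGroup W]
    [Module K W] (σ : K →+* K) (F : V → W) : Prop where
  map_smul (c : K) (x : V) : F (c • x) = (c * σ c) • F x
  exists_companion : ∃ B : V →ₗ[K] V →ₛₗ[σ] W, ∀ x y, F (x + y) = F x + F y + (B x y + B y x)

namespace IsSemiquadratic

variable {K V W : Type*} [Field K] [AddCommGroup V] [Module K V] [AddCommGroup W] [Module K W]
  {σ : K →+* K} {F : V → W}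

theorem map_zero (hF : IsSemiquadratic σ F) : F 0 = 0 := by
  simpa using hF.map_smul 0 0

theorem map_neg (hF : IsSemiquadratic σ F) (x : V) : F (-x) = F x := by
  simpa using hF.map_smul (-1) x

/-- A `σ`-semiquadratic map, viewed as a quadratic map over the fixed field of `σ`. -/
def toQuadraticMap (hF : IsSemiquadratic σ F) :
    QuadraticMap (σ.eqLocusField (RingHom.id K)) V W where
  toFun := F
  toFun_smul c x := by
    have hc : σ c = c := c.2
    exact (hF.map_smul (c : K) x).trans (by rw [hc]; rfl)
  exists_companion' := by
    obtain ⟨B, hB⟩ := hF.exists_companion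
    have hσ (c : σ.eqLocusField (RingHom.id K)) : σ c = c := c.2
    refine ⟨LinearMap.mk₂ _ (fun x y => B x y + B y x) (fun x x' y => ?_) (fun c x y => ?_)
      (fun x y y' => ?_) fun c x y => ?_, hB⟩
    · simp only [map_add, LinearMap.add_apply]
      abel
    · simp only [Subfield.smul_def, LinearMap.smul_apply, map_smulₛₗ, hσ,
        RingHom.id_apply, smul_add]
    · simp only [map_add, LinearMap.add_apply]
      abel
    · simp only [Subfield.smul_def, LinearMap.smul_apply, map_smulₛₗ, hσ,
        RingHom.id_apply, smul_add]

theorem eq_or_eq_neg_of_map_eq (hF : IsSemiquadratic σ F) (hK : ringChar K ≠ 2)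
    (hzero : ∀ x, F x = 0 → x = 0) (h2 : ∀ x ≠ 0, {y | y ≠ 0 ∧ F y = F x}.ncard = 2)
    (x y : V) (hxy : F x = F y) : x = y ∨ x = -y := by
  obtain rfl | hy := eq_or_ne y 0
  · exact .inl (hzero x (hxy.trans hF.map_zero))
  have hx : x ≠ 0 := by
    rintro rfl
    exact hy (hzero y (hxy.symm.trans hF.map_zero))
  have hpair : {y, -y} = {z | z ≠ 0 ∧ F z = F y} := by
    refine Set.eq_of_subset_of_ncard_le ?_ ?_ (Set.finite_of_ncard_ne_zero (by simp [h2 y hy]))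
    · rintro z (rfl | rfl)
      exacts [⟨hy, rfl⟩, ⟨neg_ne_zero.mpr hy, hF.map_neg y⟩]
    · rw [h2 y hy, Set.ncard_pair fun h => hy (eq_zero_of_eq_neg_self hK h)]
  have hmem : x ∈ ({y, -y} : Set V) := hpair ▸ ⟨hx, hxy⟩
  exact hmem

theorem eq_one_or_eq_neg_one_of_mul_map_eq_one (hF : IsSemiquadratic σ F) [Nontrivial V]
    (hpm : ∀ x y, F x = F y → x = y ∨ x = -y) (c : K) (hc : c * σ c = 1) : c = 1 ∨ c = -1 := by
  obtain ⟨x, hx⟩ := exists_ne (0 : V)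
  have hmap : F (c • x) = F x := by rw [hF.map_smul, hc, one_smul]
  refine (hpm _ _ hmap).imp (fun h => ?_) fun h => ?_
  · exact smul_left_injective K hx (by simpa using h)
  · exact smul_left_injective K hx (by simpa using h)

theorem exists_map_eq_smul (hF : IsSemiquadratic σ F) [Finite K] [Module.Finite K V]
    [Module.Finite K W] (hK : ringChar K ≠ 2) (hV : Even (finrank K V))
    (hVW : finrank K V = finrank K W) (hpm : ∀ x y, F x = F y → x = y ∨ x = -y) {ν : K}
    (hν : σ ν = ν) (hν0 : ν ≠ 0) (x : V) : ∃ y, F y = ν • F x := by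
  let K₀ := σ.eqLocusField (RingHom.id K)
  have hK₀ : ringChar K₀ ≠ 2 := by rwa [Algebra.ringChar_eq K₀ K]
  have : Finite V := Module.finite_of_finite K
  have : Finite W := Module.finite_of_finite K
  have hV₀ : Even (finrank K₀ V) := by
    rw [← finrank_mul_finrank K₀ K V]
    exact hV.mul_left _
  have hVW₀ : finrank K₀ V = finrank K₀ W := by
    rw [← finrank_mul_finrank K₀ K V, ← finrank_mul_finrank K₀ K W, hVW]
  let Q : QuadraticMap K₀ V W := hF.toQuadraticMap
  let ν₀ : K₀ := ⟨ν, hν⟩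
  have hcard : Nat.card {y // Q y = ν₀ • Q x} = Nat.card {y // Q y = Q x} :=
    natCard_fiber_smul hK₀ hV₀ hVW₀ (fun _ _ => eq_zero_or_eq_zero_of_polar_eq_zero hK₀ hpm)
      (fun h => hν0 (congrArg Subtype.val h)) (Q x)
  have : Nonempty {y // Q y = Q x} := ⟨x, rfl⟩
  have hpos : 0 < Nat.card {y // Q y = ν₀ • Q x} := hcard ▸ Nat.card_pos
  obtain ⟨⟨y, hy⟩⟩ := (Nat.card_pos_iff.mp hpos).1
  exact ⟨y, hy⟩

/-- The map `[x] ↦ [F x]` between projective spaces induced by a `σ`-semiquadratic map `F` that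
vanishes only at `0`. -/
def projectivizationMap (hF : IsSemiquadratic σ F) (hzero : ∀ x, F x = 0 → x = 0) :
    Projectivization K V → Projectivization K W :=
  Projectivization.lift (fun x => .mk K (F x) (mt (hzero x) x.2)) fun x y c hxy =>
    (Projectivization.mk_eq_mk_iff' ..).mpr ⟨c * σ c, by rw [hxy, hF.map_smul]⟩

theorem mk_eq_mk_iff_isSquare (hF : IsSemiquadratic σ F) [Finite K]
    (hzero : ∀ x, F x = 0 → x = 0) (hpm : ∀ x y, F x = F y → x = y ∨ x = -y) {x y : V} (hx : x ≠ 0)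
    (hy : y ≠ 0) {a : K} (ha : F x = a • F y) :
    Projectivization.mk K x hx = Projectivization.mk K y hy ↔ IsSquare a := by
  have : Nontrivial V := ⟨x, 0, hx⟩
  rw [Projectivization.mk_eq_mk_iff']
  constructor
  · rintro ⟨c, rfl⟩
    have hca : c * σ c = a :=
      smul_left_injective K (mt (hzero y) hy) ((hF.map_smul c y).symm.trans ha)
    exact hca ▸ isSquare_mul_map σ c
  · intro hsq
    obtain ⟨c, rfl⟩ := exists_mul_map_eq_of_isSquare
      (hF.eq_one_or_eq_neg_one_of_mul_map_eq_one hpm) hsq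
    rcases hpm _ _ (ha.trans (hF.map_smul c y).symm) with h | h
    exacts [⟨c, h.symm⟩, ⟨-c, by rw [h, neg_smul]⟩]

theorem projectivizationMap_fiber (hF : IsSemiquadratic σ F) [Finite K]
    (hzero : ∀ x, F x = 0 → x = 0) (hpm : ∀ x y, F x = F y → x = y ∨ x = -y) {x y : V} (hx : x ≠ 0)
    (hy : y ≠ 0) {ν : K} (hν : ¬IsSquare ν) (hxy : F y = ν • F x) :
    {R | hF.projectivizationMap hzero R = hF.projectivizationMap hzero (.mk K x hx)} =
      {.mk K x hx, .mk K y hy} := by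
  have hν0 : ν ≠ 0 := fun h => hν (h ▸ IsSquare.zero)
  ext R
  induction R using Projectivization.ind with
  | h z hz =>
  have hmk : hF.projectivizationMap hzero (.mk K z hz) =
      hF.projectivizationMap hzero (.mk K x hx) ↔ ∃ a : K, a • F x = F z :=
    Projectivization.mk_eq_mk_iff' ..
  simp only [Set.mem_ofPred_eq, Set.mem_insert_iff, Set.mem_singleton_iff, hmk]
  constructor
  · rintro ⟨a, ha⟩
    have hzy : F z = (a * ν⁻¹) • F y := by rw [hxy, smul_smul, inv_mul_cancel_right₀ hν0, ha]
    rw [hF.mk_eq_mk_iff_isSquare hzero hpm hz hx ha.symm,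
      hF.mk_eq_mk_iff_isSquare hzero hpm hz hy hzy, or_iff_not_imp_left]
    exact fun hsq => isSquare_mul_of_not_isSquare hsq (by rwa [isSquare_inv])
  · rintro (h | h) <;> rw [← hmk, h]
    exact (Projectivization.mk_eq_mk_iff' ..).mpr ⟨ν, hxy.symm⟩

end IsSemiquadratic

theorem IsSQH.isSemiquadratic {K : Type*} [Field K] {p k n : ℕ} [ExpChar K p]
    {F : (Fin n → K) → (Fin n → K)} (hF : IsSQH (p ^ k) F) :
    IsSemiquadratic (iterateFrobenius K p k) F := by
  choose hsmul b hadd_left hadd_right hsmul_left hsmul_right hpolar using hF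
  refine ⟨fun c x => funext fun i => ?_, LinearMap.mk₂'ₛₗ (RingHom.id K) (iterateFrobenius K p k)
    (fun x y i => b i x y) (fun x x' y => funext fun i => hadd_left i x x' y)
    (fun c x y => funext fun i => hsmul_left i c x y)
    (fun x y y' => funext fun i => hadd_right i x y y')
    (fun c x y => funext fun i => hsmul_right i c x y), fun x y => funext fun i => ?_⟩
  · rw [hsmul, pow_succ']
    rfl
  · change F (x + y) i = F x i + F y i + (b i x y + b i y x)
    linear_combination hpolar i x y

theorem stmt4_general {K V W : Type*} [Field K] [Finite K] [AddCommGroup V] [Module K V]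
    [Module.Finite K V] [AddCommGroup W] [Module K W] [Module.Finite K W] (hK : ringChar K ≠ 2)
    (hV : Even (finrank K V)) (hVW : finrank K V = finrank K W) {σ : K →+* K} {F : V → W}
    (hF : IsSemiquadratic σ F) (hzero : ∀ x, F x = 0 → x = 0)
    (h2 : ∀ x ≠ 0, {y | y ≠ 0 ∧ F y = F x}.ncard = 2) (P : Projectivization K W)
    (hP : ∃ Q, hF.projectivizationMap hzero Q = P) :
    {Q | hF.projectivizationMap hzero Q = P}.ncard = 2 := by
  obtain ⟨Q, rfl⟩ := hP
  induction Q using Projectivization.ind with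
  | h x hx =>
  have : Nontrivial V := ⟨x, 0, hx⟩
  have hpm := hF.eq_or_eq_neg_of_map_eq hK hzero h2
  obtain ⟨ν, hσν, hν⟩ := exists_map_eq_self_not_isSquare hK
    (hF.eq_one_or_eq_neg_one_of_mul_map_eq_one hpm)
  have hν0 : ν ≠ 0 := fun h => hν (h ▸ IsSquare.zero)
  obtain ⟨y, hy⟩ := hF.exists_map_eq_smul hK hV hVW hpm hσν hν0 x
  have hy0 : y ≠ 0 := by
    rintro rfl
    exact smul_ne_zero hν0 (mt (hzero x) hx) (hy.symm.trans hF.map_zero)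
  rw [hF.projectivizationMap_fiber hzero hpm hx hy0 hν hy, Set.ncard_pair]
  exact fun h => hν ((hF.mk_eq_mk_iff_isSquare hzero hpm hy0 hx hy).mp h.symm)

/-- for odd `q` and even `n`, if `F ∈ SQH(n,q)` vanishes only at `0`
and is 2-to-1 on `F_q^n ∖ {0}`, then the induced map `[x] ↦ [F x]` on
`P^{n-1}(F_q)` is 2-to-1: every point in its image has exactly two preimages. -/
theorem stmt4 {p m k n : ℕ} (hp : p.Prime) (hpodd : Odd p) (hm : 0 < m) (hn : Even n)
    {K : Type*} [Field K] [Fintype K] (hK : Fintype.card K = p ^ m)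
    (F : (Fin n → K) → (Fin n → K)) (hSQH : IsSQH (p ^ k) F)
    (hzero : ∀ x, F x = 0 ↔ x = 0)
    (h2 : ∀ x : Fin n → K, x ≠ 0 → {y : Fin n → K | y ≠ 0 ∧ F y = F x}.ncard = 2) :
    ∃ G : Projectivization K (Fin n → K) → Projectivization K (Fin n → K),
      (∀ (x : Fin n → K) (hx : x ≠ 0),
        G (Projectivization.mk K x hx) =
          Projectivization.mk K (F x) (fun h => hx ((hzero x).mp h))) ∧
      ∀ P : Projectivization K (Fin n → K), (∃ Q, G Q = P) →
        {Q : Projectivization K (Fin n → K) | G Q = P}.ncard = 2 := by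
  have : Fact p.Prime := ⟨hp⟩
  have : CharP K p := charP_of_card_eq_prime_pow hK
  have hchar : ringChar K ≠ 2 := by
    rw [ringChar.eq K p]
    rintro rfl
    exact absurd hpodd (by decide)
  have hF : IsSemiquadratic (iterateFrobenius K p k) F := hSQH.isSemiquadratic
  exact ⟨hF.projectivizationMap fun x => (hzero x).mp, fun _ _ => rfl,
    stmt4_general hchar (by simpa using hn) rfl hF _ h2⟩
end
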